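/- Invariance of order intervals: let g : ℝ → ℝ be locally Lipschitz continuous, let γ ≤ δ be real numbers with g(γ) ≥ 0 and g(δ) ≤ 0, let T > 0, and let u : ℝ × [0,T] → ℝ be a bounded continuous mild solution of ∂_t u + Au = g(u). If γ ≤ u(x,0) ≤ δ for all x ∈ ℝ, then γ ≤ u(x,t) ≤ δ for all x ∈ ℝ and t ∈ [0,T]. -/

import Mathlib

open Real MeasureTheory

/-- The fundamental solution at time `t` of the free equation `∂_t u + Au = 0`,
where `A` is the order-1 pseudodifferential operator with symbol
`λ ↦ e^{−iπ·sign(λ)·β/2}|λ|`, `κ = cos(πβ/2)`, `σ = sin(πβ/2)`. -/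
noncomputable def stableKernel (κ σ t x : ℝ) : ℝ :=
  κ * t / (π * ((x - σ * t) ^ 2 + (κ * t) ^ 2))

/-- `u : ℝ × [0,T] → ℝ` is a mild solution of `∂_t u + Au = g(u)`:
`u(x,t) = ∫ p_t(x−y)·u(y,0) dy + ∫₀ᵗ ∫ p_{t−s}(x−y)·g(u(y,s)) dy ds`. -/
def IsMildSolution (κ σ : ℝ) (g : ℝ → ℝ) (T : ℝ) (u : ℝ → ℝ → ℝ) : Prop :=
  ∀ x t : ℝ, 0 < t → t ≤ T →
    u x t = (∫ y : ℝ, stableKernel κ σ t (x - y) * u y 0) +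
      ∫ s in Set.Ioc (0 : ℝ) t,
        ∫ y : ℝ, stableKernel κ σ (t - s) (x - y) * g (u y s)

/-!
Let `P (t, x)` be the probability measure that the free evolution integrates against. Along
`s ↦ ∫ u y s ∂P (t - s, x)` the semigroup law turns Duhamel's formula into a scalar integral
equation whose integrand is the average of the forcing. If `u ≤ δ + b`, the Lipschitz bound
`g u ≤ L |u - δ|` gives `g u ≤ -L (u - δ) + 2 L b`. Hence at every time at which the average of `u`
exceeds `δ`, the average of `g u` is at most `2 L b`, and the excess is bounded by the integral of
`2 L b` from the last time at which it was nonpositive. For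
`b s = C exp (4 L s)` this halves `C`, so iterating gives `u ≤ δ`; the lower bound follows by
applying this to `-u`. Only positivity, conservation of mass and the semigroup law are involved; for
the fundamental solution they hold because it is a Cauchy density, whose characteristic function is
`exp (t (-κ |ξ| - i σ ξ))` up to translation.
-/

open ProbabilityTheory Set Function

section ScalarComparison

lemma add_integral_le_integral_of_pos_imp_le {φ b : ℝ → ℝ} {a t A : ℝ} (hat : a ≤ t)
    (hA : A ≤ 0) (hφ : IntervalIntegrable φ volume a t) (hb : IntervalIntegrable b volume a t)
    (hb_nonneg : ∀ s ∈ Ioo a t, 0 ≤ b s)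
    (hφb : ∀ s ∈ Ioo a t, 0 < A + ∫ r in a..s, φ r → φ s ≤ b s) :
    A + ∫ r in a..t, φ r ≤ ∫ r in a..t, b r := by
  have hw_cont : ContinuousOn (fun s => A + ∫ r in a..s, φ r) (Icc a t) :=
    continuousOn_const.add <| intervalIntegral.continuousOn_primitive_interval'
      hφ left_mem_uIcc |>.mono (uIcc_of_le hat).ge
  have hS_compact : IsCompact (Icc a t ∩ (fun s => A + ∫ r in a..s, φ r) ⁻¹' Iic 0) :=
    isCompact_Icc.of_isClosed_subset
      (hw_cont.preimage_isClosed_of_isClosed isClosed_Icc isClosed_Iic) inter_subset_left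
  obtain ⟨τ, ⟨hτ, hwτ⟩, hτ_last⟩ := hS_compact.exists_isGreatest ⟨a, ⟨le_rfl, hat⟩, by simpa⟩
  have hsub_left : uIcc a τ ⊆ uIcc a t := uIcc_subset_uIcc_left (Icc_subset_uIcc hτ)
  have hsub_right : uIcc τ t ⊆ uIcc a t := uIcc_subset_uIcc_right (Icc_subset_uIcc hτ)
  have hφ_right : ∫ r in τ..t, φ r ≤ ∫ r in τ..t, b r :=
    intervalIntegral.integral_mono_on_of_le_Ioo hτ.2 (hφ.mono_set hsub_right)
      (hb.mono_set hsub_right) fun s hs => by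
        have hs' : s ∈ Ioo a t := ⟨hτ.1.trans_lt hs.1, hs.2⟩
        refine hφb s hs' (not_le.1 fun hws => ?_)
        exact hs.1.not_ge (hτ_last ⟨Ioo_subset_Icc_self hs', hws⟩)
  have hb_left : 0 ≤ ∫ r in a..τ, b r := by
    simpa using intervalIntegral.integral_mono_on_of_le_Ioo hτ.1 (f := 0)
      IntervalIntegrable.zero (hb.mono_set hsub_left) fun s hs =>
        hb_nonneg s ⟨hs.1, hs.2.trans_le hτ.2⟩
  have hφ_split := intervalIntegral.integral_add_adjacent_intervals
    (hφ.mono_set hsub_left) (hφ.mono_set hsub_right)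
  have hb_split := intervalIntegral.integral_add_adjacent_intervals
    (hb.mono_set hsub_left) (hb.mono_set hsub_right)
  have hwτ' : A + ∫ r in a..τ, φ r ≤ 0 := hwτ
  linarith

lemma integral_mul_exp_mul_le {C c : ℝ} (hC : 0 ≤ C) (t : ℝ) :
    ∫ s in 0..t, C * (c * exp (c * s)) ≤ C * exp (c * t) := by
  have hderiv : ∀ s : ℝ, HasDerivAt (fun s => C * exp (c * s)) (C * (c * exp (c * s))) s :=
    fun s => by simpa [mul_comm] using (((hasDerivAt_id s).const_mul c).exp.const_mul C)
  rw [intervalIntegral.integral_eq_sub_of_hasDerivAt (fun s _ => hderiv s)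
    (Continuous.intervalIntegrable (by fun_prop) _ _)]
  simpa

lemma le_mul_sub_add_of_le_mul_abs_sub {L v δ y b : ℝ} (hL : 0 ≤ L) (hb : 0 ≤ b)
    (hy : y ≤ L * |v - δ|) (hv : v ≤ δ + b) : y ≤ L * (δ - v) + 2 * L * b := by
  rcases abs_cases (v - δ) with ⟨h, -⟩ | ⟨h, -⟩ <;> rw [h] at hy <;> nlinarith

variable {X : Type*} [MeasurableSpace X] {μ : Measure X} {f h : X → ℝ}

lemma integrable_of_abs_le [IsFiniteMeasure μ] {M : ℝ} (hf : Measurable f)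
    (hM : ∀ x, |f x| ≤ M) : Integrable f μ :=
  .of_bound hf.aestronglyMeasurable M (.of_forall hM)

lemma abs_integral_le_of_abs_le [IsProbabilityMeasure μ] {M : ℝ} (hM : ∀ x, |f x| ≤ M) :
    |∫ x, f x ∂μ| ≤ M := by
  simpa using norm_integral_le_of_norm_le_const (μ := μ) (f := f) (.of_forall hM)

lemma integral_le_mul_sub_add_of_le_mul_abs_sub [IsProbabilityMeasure μ] {L δ b : ℝ}
    (hL : 0 ≤ L) (hb : 0 ≤ b)
    (hf_int : Integrable f μ) (hh_int : Integrable h μ) (hf : ∀ x, f x ≤ L * |h x - δ|)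
    (hh : ∀ x, h x ≤ δ + b) : ∫ x, f x ∂μ ≤ L * (δ - ∫ x, h x ∂μ) + 2 * L * b := by
  have hdiff : Integrable (fun x => L * (δ - h x)) μ :=
    ((integrable_const δ).sub hh_int).const_mul L
  calc ∫ x, f x ∂μ ≤ ∫ x, (L * (δ - h x) + 2 * L * b) ∂μ :=
        integral_mono hf_int (hdiff.add (integrable_const _)) fun x =>
          le_mul_sub_add_of_le_mul_abs_sub hL hb (hf x) (hh x)
    _ = L * (δ - ∫ x, h x ∂μ) + 2 * L * b := by
        rw [integral_add hdiff (integrable_const _), integral_const_mul,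
          integral_sub (integrable_const δ) hh_int]
        simp

end ScalarComparison

section MarkovSemigroup

variable {X : Type*} [MeasurableSpace X] {P : Kernel (ℝ × X) X} {F u v : X → ℝ → ℝ} {T M N : ℝ}

/-- The Chapman–Kolmogorov relation for transition probabilities `P (t, x)`, at positive times.
Time is a real number so that `P` is one kernel, jointly measurable in `(t, x)`; the values of `P`
at nonpositive times carry no information. -/
def IsTransitionSemigroup (P : Kernel (ℝ × X) X) : Prop :=
  ∀ ⦃s t : ℝ⦄, 0 < s → 0 < t → P.sectR t ∘ₖ P.sectR s = P.sectR (s + t)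

/-- `u` is given on `(0, T]` by Duhamel's formula with forcing term `F`, where the free evolution
is the one generated by the transition probabilities `P (t, x)`. A mild solution of a semilinear
equation is the case `F y s = g (u y s)`. -/
def IsDuhamelSolution (P : Kernel (ℝ × X) X) (F : X → ℝ → ℝ) (T : ℝ) (u : X → ℝ → ℝ) : Prop :=
  ∀ x t, 0 < t → t ≤ T →
    u x t = ∫ y, u y 0 ∂P (t, x) + ∫ s in 0..t, ∫ y, F y s ∂P (t - s, x)

namespace IsDuhamelSolution

lemma congr {G : X → ℝ → ℝ} (hu : IsDuhamelSolution P F T u)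
    (huv : ∀ x, ∀ t ∈ Icc 0 T, u x t = v x t) (hFG : ∀ x, ∀ t ∈ Icc 0 T, F x t = G x t) :
    IsDuhamelSolution P G T v := by
  intro x t ht htT
  have hF_integral : ∫ s in 0..t, ∫ y, F y s ∂P (t - s, x) =
      ∫ s in 0..t, ∫ y, G y s ∂P (t - s, x) :=
    intervalIntegral.integral_congr fun s hs => by
      rw [uIcc_of_le ht.le] at hs
      simp only [hFG _ s ⟨hs.1, hs.2.trans htT⟩]
  rw [← huv x t ⟨ht.le, htT⟩, hu x t ht htT, hF_integral]
  simp only [huv _ 0 ⟨le_rfl, ht.le.trans htT⟩]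

lemma neg (hu : IsDuhamelSolution P F T u) :
    IsDuhamelSolution P (fun y s => -F y s) T (fun y s => -u y s) := fun x t ht htT => by
  simp only [integral_neg, intervalIntegral.integral_neg, hu x t ht htT, neg_add]

end IsDuhamelSolution

lemma IsTransitionSemigroup.integral_integral (hP : IsTransitionSemigroup P) {s t : ℝ} (hs : 0 < s)
    (ht : 0 < t) {x : X} {f : X → ℝ} (hf : Integrable f (P (s + t, x))) :
    ∫ y, ∫ z, f z ∂P (t, y) ∂P (s, x) = ∫ z, f z ∂P (s + t, x) := by
  have hcomp := hP hs ht
  rw [← Kernel.sectR_apply P x (s + t), ← hcomp, Kernel.integral_comp]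
  · simp only [Kernel.sectR_apply]
  · rwa [hcomp]

variable [IsMarkovKernel P]

lemma measurable_integral_transition_sub (hF : Measurable (uncurry F)) (t : ℝ) :
    Measurable fun q : X × ℝ => ∫ y, F y q.2 ∂P (t - q.2, q.1) := by
  have hreverse : Measurable fun q : X × ℝ => (t - q.2, q.1) := by fun_prop
  have hF' : StronglyMeasurable fun w : (X × ℝ) × X => F w.2 w.1.2 :=
    (hF.comp (measurable_snd.prodMk measurable_fst.snd)).stronglyMeasurable
  exact (hF'.integral_kernel_prod_right' (κ := P.comap _ hreverse)).measurable

lemma intervalIntegrable_integral_transition_sub (hF : Measurable (uncurry F))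
    (hN : ∀ y s, |F y s| ≤ N) (x : X) (a b t : ℝ) :
    IntervalIntegrable (fun s => ∫ y, F y s ∂P (t - s, x)) volume a b := by
  rw [intervalIntegrable_iff]
  exact .of_bound measure_Ioc_lt_top ((measurable_integral_transition_sub hF t).comp
    measurable_prodMk_left).aestronglyMeasurable N
    (.of_forall fun s => abs_integral_le_of_abs_le (hN · s))

lemma integrable_integral_transition_sub_prod (hF : Measurable (uncurry F))
    (hN : ∀ y r, |F y r| ≤ N) (s t : ℝ) (q : ℝ × X) :
    Integrable (uncurry fun y r => ∫ z, F z r ∂P (s - r, y))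
      ((P q).prod (volume.restrict (Ioc 0 t))) :=
  .of_bound (measurable_integral_transition_sub hF s).aestronglyMeasurable N
    (.of_forall fun w => abs_integral_le_of_abs_le (hN · w.2))

lemma IsTransitionSemigroup.integral_intervalIntegral (hP : IsTransitionSemigroup P) {s t : ℝ}
    (hs : 0 < s) (hst : s < t) (hF : Measurable (uncurry F)) (hN : ∀ y r, |F y r| ≤ N) (x : X) :
    ∫ y, (∫ r in 0..s, ∫ z, F z r ∂P (s - r, y)) ∂P (t - s, x) =
      ∫ r in 0..s, ∫ z, F z r ∂P (t - r, x) := by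
  simp only [intervalIntegral.integral_of_le hs.le]
  rw [integral_integral_swap (integrable_integral_transition_sub_prod hF hN s s _)]
  simp only [integral_Ioc_eq_integral_Ioo]
  refine setIntegral_congr_fun measurableSet_Ioo fun r hr => ?_
  have hsemigroup := hP.integral_integral (x := x) (sub_pos.2 hst) (sub_pos.2 hr.2)
    (integrable_of_abs_le hF.of_uncurry_right (hN · r))
  simpa only [sub_add_sub_cancel] using hsemigroup

namespace IsDuhamelSolution

lemma integral_transition_eq (hu : IsDuhamelSolution P F T u) (hP : IsTransitionSemigroup P)
    (hu_meas : Measurable (u · 0)) (hM : ∀ y, |u y 0| ≤ M)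
    (hF_meas : Measurable (uncurry F)) (hN : ∀ y s, |F y s| ≤ N)
    {s t : ℝ} (hs : 0 < s) (hsT : s ≤ T) (hst : s < t) (x : X) :
    ∫ y, u y s ∂P (t - s, x) =
      ∫ y, u y 0 ∂P (t, x) + ∫ r in 0..s, ∫ y, F y r ∂P (t - r, x) := by
  have hfree : Integrable (fun y => ∫ z, u z 0 ∂P (s, y)) (P (t - s, x)) :=
    integrable_of_abs_le (hu_meas.stronglyMeasurable.integral_kernel (κ := P.sectR s)).measurable
      (fun y => abs_integral_le_of_abs_le hM)
  have hforced : Integrable (fun y => ∫ r in 0..s, ∫ z, F z r ∂P (s - r, y)) (P (t - s, x)) := by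
    simp only [intervalIntegral.integral_of_le hs.le]
    exact (integrable_integral_transition_sub_prod hF_meas hN s s _).integral_prod_left
  simp only [hu _ s hs hsT]
  rw [integral_add hfree hforced,
    hP.integral_integral (sub_pos.2 hst) hs (integrable_of_abs_le hu_meas hM), sub_add_cancel,
    hP.integral_intervalIntegral hs hst hF_meas hN]

lemma le_add_half_mul_exp (hu : IsDuhamelSolution P F T u) (hP : IsTransitionSemigroup P)
    (hu_meas : Measurable (uncurry u)) (hM : ∀ y s, |u y s| ≤ M)
    (hF_meas : Measurable (uncurry F)) (hN : ∀ y s, |F y s| ≤ N)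
    {L δ C : ℝ} (hL : 0 ≤ L) (hFL : ∀ y s, F y s ≤ L * |u y s - δ|) (h0 : ∀ x, u x 0 ≤ δ)
    (hC : 0 ≤ C) (huC : ∀ x t, 0 < t → t ≤ T → u x t ≤ δ + C * exp (4 * L * t))
    (x : X) {t : ℝ} (ht : 0 < t) (htT : t ≤ T) :
    u x t ≤ δ + C / 2 * exp (4 * L * t) := by
  have hu_int (s : ℝ) (q : ℝ × X) : Integrable (u · s) (P q) :=
    integrable_of_abs_le hu_meas.of_uncurry_right (hM · s)
  have hfree : ∫ y, u y 0 ∂P (t, x) - δ ≤ 0 := by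
    simpa using integral_mono (hu_int 0 (t, x)) (integrable_const δ) h0
  have hforcing : ∀ s ∈ Ioo 0 t,
      0 < ∫ y, u y 0 ∂P (t, x) - δ + ∫ r in 0..s, ∫ y, F y r ∂P (t - r, x) →
        ∫ y, F y s ∂P (t - s, x) ≤ C / 2 * (4 * L * exp (4 * L * s)) := by
    intro s hs hpos
    have hsT : s ≤ T := hs.2.le.trans htT
    have hF_le := integral_le_mul_sub_add_of_le_mul_abs_sub (μ := P (t - s, x)) hL (by positivity)
      (integrable_of_abs_le hF_meas.of_uncurry_right (hN · s)) (hu_int s _)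
      (hFL · s) (huC · s hs.1 hsT)
    have hflow := hu.integral_transition_eq hP hu_meas.of_uncurry_right (hM · 0)
      hF_meas hN hs.1 hsT hs.2 x
    nlinarith
  have hcompare := add_integral_le_integral_of_pos_imp_le ht.le hfree
    (intervalIntegrable_integral_transition_sub hF_meas hN x 0 t t)
    (Continuous.intervalIntegrable (by fun_prop) _ _) (fun s _ => by positivity) hforcing
  linarith [hu x t ht htT, integral_mul_exp_mul_le (c := 4 * L) (div_nonneg hC zero_le_two) t]

theorem le_of_forcing_le_mul_abs_sub (hu : IsDuhamelSolution P F T u)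
    (hP : IsTransitionSemigroup P) (hu_meas : Measurable (uncurry u)) (hM : ∀ y s, |u y s| ≤ M)
    (hF_meas : Measurable (uncurry F)) (hN : ∀ y s, |F y s| ≤ N)
    {L δ : ℝ} (hL : 0 ≤ L) (hFL : ∀ y s, F y s ≤ L * |u y s - δ|) (h0 : ∀ x, u x 0 ≤ δ)
    (x : X) {t : ℝ} (ht : 0 < t) (htT : t ≤ T) : u x t ≤ δ := by
  have hM_nonneg : 0 ≤ M := (abs_nonneg _).trans (hM x 0)
  have hdecay (n : ℕ) : ∀ x t, 0 < t → t ≤ T →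
      u x t ≤ δ + (M + |δ|) / 2 ^ n * exp (4 * L * t) := by
    induction n with
    | zero =>
      intro x t ht _
      have hexp : 1 ≤ exp (4 * L * t) := one_le_exp (by positivity)
      have hbound : u x t ≤ δ + (M + |δ|) := by
        linarith [le_abs_self (u x t), hM x t, neg_abs_le δ]
      rw [pow_zero, div_one]
      exact hbound.trans (by gcongr; exact le_mul_of_one_le_right (by positivity) hexp)
    | succ n ih =>
      intro x t ht htT
      rw [pow_succ, ← div_div]
      exact hu.le_add_half_mul_exp hP hu_meas hM hF_meas hN hL hFL h0 (by positivity) ih x ht htT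
  have hlim : Filter.Tendsto (fun n : ℕ => δ + (M + |δ|) / 2 ^ n * exp (4 * L * t))
      Filter.atTop (nhds δ) := by
    have hgeom : Filter.Tendsto (fun n : ℕ => (M + |δ|) / 2 ^ n) Filter.atTop (nhds 0) :=
      (tendsto_pow_atTop_atTop_of_one_lt one_lt_two).const_div_atTop _
    simpa using (hgeom.mul_const (exp (4 * L * t))).const_add δ
  exact ge_of_tendsto' hlim fun n => hdecay n x t ht htT

theorem le_of_nonlinearity_nonpos {g : ℝ → ℝ} (hu : IsDuhamelSolution P (fun y s => g (u y s)) T u)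
    (hP : IsTransitionSemigroup P) (hg : LocallyLipschitz g) (hu_meas : Measurable (uncurry u))
    (hM : ∀ y s, |u y s| ≤ M) {δ : ℝ} (hgδ : g δ ≤ 0) (h0 : ∀ x, u x 0 ≤ δ)
    (x : X) {t : ℝ} (ht : 0 < t) (htT : t ≤ T) : u x t ≤ δ := by
  have hu_mem (y : X) (s : ℝ) : u y s ∈ Icc (-max M |δ|) (max M |δ|) :=
    abs_le.1 ((hM y s).trans (le_max_left _ _))
  have hδ_mem : δ ∈ Icc (-max M |δ|) (max M |δ|) := abs_le.1 (le_max_right _ _)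
  obtain ⟨K, hK⟩ :=
    (hg.locallyLipschitzOn (s := Icc _ _)).exists_lipschitzOnWith_of_compact isCompact_Icc
  have hgK (y : X) (s : ℝ) : g (u y s) ≤ K * |u y s - δ| := by
    have hdist := hK.dist_le_mul _ (hu_mem y s) _ hδ_mem
    rw [Real.dist_eq, Real.dist_eq] at hdist
    linarith [le_abs_self (g (u y s) - g δ)]
  obtain ⟨N, hN⟩ := isCompact_Icc.exists_bound_of_continuousOn hg.continuous.continuousOn
  exact hu.le_of_forcing_le_mul_abs_sub hP hu_meas hM (hg.continuous.measurable.comp hu_meas)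
    (fun y s => hN _ (hu_mem y s)) K.2 hgK h0 x ht htT

theorem ge_of_nonlinearity_nonneg {g : ℝ → ℝ} (hu : IsDuhamelSolution P (fun y s => g (u y s)) T u)
    (hP : IsTransitionSemigroup P) (hg : LocallyLipschitz g) (hu_meas : Measurable (uncurry u))
    (hM : ∀ y s, |u y s| ≤ M) {γ : ℝ} (hgγ : 0 ≤ g γ) (h0 : ∀ x, γ ≤ u x 0)
    (x : X) {t : ℝ} (ht : 0 < t) (htT : t ≤ T) : γ ≤ u x t := by
  have hneg : LocallyLipschitz (Neg.neg : ℝ → ℝ) := LipschitzWith.id.neg.locallyLipschitz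
  have hu_neg : IsDuhamelSolution P (fun y s => -g (-(-u y s))) T (fun y s => -u y s) := by
    simpa only [neg_neg] using hu.neg
  exact neg_le_neg_iff.1 <| hu_neg.le_of_nonlinearity_nonpos (g := fun z => -g (-z)) hP
    (hneg.comp (hg.comp hneg)) hu_meas.neg (by simpa only [abs_neg] using hM)
    (by simpa only [neg_neg, neg_nonpos] using hgγ) (fun y => neg_le_neg (h0 y)) x ht htT

end IsDuhamelSolution

theorem mild_solution_order_interval_invariance_general (hP : IsTransitionSemigroup P)
    {g : ℝ → ℝ} (hg : LocallyLipschitz g) {γ δ : ℝ} (hgγ : 0 ≤ g γ) (hgδ : g δ ≤ 0)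
    (hu_meas : Measurable ((univ ×ˢ Icc 0 T).domRestrict (uncurry u)))
    (hu_bdd : ∃ M : ℝ, ∀ x, ∀ t ∈ Icc 0 T, |u x t| ≤ M)
    (hu : IsDuhamelSolution P (fun y s => g (u y s)) T u) (h0 : ∀ x, u x 0 ∈ Icc γ δ) :
    ∀ x, ∀ t ∈ Icc 0 T, u x t ∈ Icc γ δ := by
  intro x t ht
  obtain ⟨M, hM⟩ := hu_bdd
  have hT : 0 ≤ T := ht.1.trans ht.2
  set v : X → ℝ → ℝ := fun y s => u y (projIcc 0 T hT s)
  have hvu (y : X) (s : ℝ) (hs : s ∈ Icc 0 T) : v y s = u y s := by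
    simp only [v, projIcc_of_mem hT hs]
  have hv : IsDuhamelSolution P (fun y s => g (v y s)) T v :=
    hu.congr (fun y s hs => (hvu y s hs).symm) (fun y s hs => by rw [hvu y s hs])
  have hv_meas : Measurable (uncurry v) := by
    have hproj : Measurable fun q : X × ℝ =>
        (⟨(q.1, projIcc 0 T hT q.2), mem_univ _, Subtype.coe_prop _⟩ :
          (univ ×ˢ Icc 0 T : Set (X × ℝ))) := by
      fun_prop
    exact hu_meas.comp hproj
  have hv_bdd (y : X) (s : ℝ) : |v y s| ≤ M := hM y _ (Subtype.coe_prop _)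
  have hv0 (y : X) : v y 0 ∈ Icc γ δ := by rw [hvu y 0 ⟨le_rfl, hT⟩]; exact h0 y
  rcases ht.1.eq_or_lt with rfl | ht_pos
  · exact h0 x
  rw [← hvu x t ht]
  exact ⟨hv.ge_of_nonlinearity_nonneg hP hg hv_meas hv_bdd hgγ (fun y => (hv0 y).1) x ht_pos ht.2,
    hv.le_of_nonlinearity_nonpos hP hg hv_meas hv_bdd hgδ (fun y => (hv0 y).2) x ht_pos ht.2⟩

end MarkovSemigroup

section CauchyDistribution

open scoped FourierTransform NNReal

open Complex (I)

lemma eqOn_exp_neg_abs_Ioi (a c : ℝ) :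
    EqOn (fun l : ℝ => Complex.exp ((-a + c * I) * l))
      (fun l : ℝ => Complex.exp (-(a * |l|) + c * l * I)) (Ioi 0) := fun l hl => by
  simp only [abs_of_pos (mem_Ioi.1 hl)]
  ring_nf

lemma eqOn_exp_neg_abs_Iic (a c : ℝ) :
    EqOn (fun l : ℝ => Complex.exp ((a + c * I) * l))
      (fun l : ℝ => Complex.exp (-(a * |l|) + c * l * I)) (Iic 0) := fun l hl => by
  simp only [abs_of_nonpos (mem_Iic.1 hl), Complex.ofReal_neg]
  ring_nf

lemma integrable_exp_neg_abs {a : ℝ} (ha : 0 < a) (c : ℝ) :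
    Integrable fun l : ℝ => Complex.exp (-(a * |l|) + c * l * I) := by
  have hIic := (integrableOn_exp_mul_complex_Iic (by simpa) 0).congr_fun
    (eqOn_exp_neg_abs_Iic a c) measurableSet_Iic
  have hIoi := (integrableOn_exp_mul_complex_Ioi (by simpa) 0).congr_fun
    (eqOn_exp_neg_abs_Ioi a c) measurableSet_Ioi
  simpa only [Iic_union_Ioi, integrableOn_univ] using hIic.union hIoi

lemma integral_exp_neg_abs {a : ℝ} (ha : 0 < a) (c : ℝ) :
    ∫ l : ℝ, Complex.exp (-(a * |l|) + c * l * I) = ((2 * a / (c ^ 2 + a ^ 2) : ℝ) : ℂ) := by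
  have hneg_re : (-a + c * I : ℂ).re < 0 := by simpa
  have hpos_re : 0 < (a + c * I : ℂ).re := by simpa
  have hneg_ne : (-a + c * I : ℂ) ≠ 0 := fun h => by simp [h] at hneg_re
  have hpos_ne : (a + c * I : ℂ) ≠ 0 := fun h => by simp [h] at hpos_re
  have hden_ne : (c ^ 2 + a ^ 2 : ℂ) ≠ 0 := by exact_mod_cast (by positivity : c ^ 2 + a ^ 2 ≠ 0)
  rw [← intervalIntegral.integral_Iic_add_Ioi (integrable_exp_neg_abs ha c).integrableOn
      (integrable_exp_neg_abs ha c).integrableOn,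
    ← setIntegral_congr_fun measurableSet_Ioi (eqOn_exp_neg_abs_Ioi a c),
    ← setIntegral_congr_fun measurableSet_Iic (eqOn_exp_neg_abs_Iic a c),
    integral_exp_mul_complex_Ioi hneg_re, integral_exp_mul_complex_Iic hpos_re]
  simp only [Complex.ofReal_zero, mul_zero, Complex.exp_zero]
  push_cast
  field_simp
  linear_combination (-2 * a * c ^ 2 : ℂ) * Complex.I_sq

lemma fourier_exp_neg_abs_eq_cauchyPDFReal (x₀ : ℝ) {γ : ℝ≥0} (hγ : γ ≠ 0) :
    𝓕 (fun l : ℝ => Complex.exp (-((2 * π * γ : ℝ) * |l|) + (2 * π * x₀ : ℝ) * l * I)) =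
      fun y => (cauchyPDFReal x₀ γ y : ℂ) := by
  ext y
  have hscale : 0 < 2 * π * (γ : ℝ) := by positivity
  have hintegral := integral_exp_neg_abs hscale (2 * π * (x₀ - y))
  have hpdf : 2 * (2 * π * γ) / ((2 * π * (x₀ - y)) ^ 2 + (2 * π * γ) ^ 2) =
      cauchyPDFReal x₀ γ y := by
    rw [cauchyPDFReal_def, show (y - x₀) ^ 2 = (x₀ - y) ^ 2 by ring]
    field_simp
  rw [← hpdf, ← hintegral, Real.fourier_real_eq_integral_exp_smul]
  congr 1 with l
  rw [smul_eq_mul, ← Complex.exp_add]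
  push_cast
  ring_nf

lemma integral_cauchyMeasure {E : Type*} [NormedAddCommGroup E] [NormedSpace ℝ E] (x₀ : ℝ)
    {γ : ℝ≥0} (hγ : γ ≠ 0) (f : ℝ → E) :
    ∫ y, f y ∂cauchyMeasure x₀ γ = ∫ y, cauchyPDFReal x₀ γ y • f y := by
  rw [cauchyMeasure_of_scale_ne_zero x₀ hγ, integral_withDensity_eq_integral_toReal_smul
    (measurable_cauchyPDF x₀ γ) (.of_forall fun y => ENNReal.ofReal_lt_top)]
  simp only [cauchyPDF_def, ENNReal.toReal_ofReal (cauchyPDF_pos x₀ hγ _).le]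

lemma charFun_cauchyMeasure (x₀ : ℝ) (γ : ℝ≥0) (ξ : ℝ) :
    charFun (cauchyMeasure x₀ γ) ξ = Complex.exp (-(γ * |ξ|) + x₀ * ξ * I) := by
  rcases eq_or_ne γ 0 with rfl | hγ
  · simp [charFun_dirac, mul_comm]
  have hfourier := fourier_exp_neg_abs_eq_cauchyPDFReal x₀ hγ
  have hscale : 0 < 2 * π * (γ : ℝ) := by positivity
  have hinv := congrFun (Continuous.fourierInv_fourier_eq (by fun_prop)
    (integrable_exp_neg_abs hscale (2 * π * x₀))
    (by rw [hfourier]; exact (integrable_cauchyPDFReal x₀).ofReal)) (ξ / (2 * π))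
  rw [hfourier, Real.fourierInv_eq'] at hinv
  rw [charFun_apply_real, integral_cauchyMeasure x₀ hγ]
  convert hinv using 1
  · congr 1 with y
    rw [Complex.real_smul, smul_eq_mul, mul_comm, Real.inner_apply]
    congr 2
    push_cast
    field_simp
  · rw [abs_div, abs_of_pos two_pi_pos]
    push_cast
    field_simp

lemma cauchyMeasure_eq_map (x₀ : ℝ) (γ : ℝ≥0) :
    cauchyMeasure x₀ γ = (cauchyMeasure 0 1).map fun z => x₀ + γ * z := by
  have : IsProbabilityMeasure ((cauchyMeasure 0 1).map fun z => x₀ + γ * z) :=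
    Measure.isProbabilityMeasure_map (by fun_prop)
  refine Measure.ext_of_charFun (funext fun ξ => ?_)
  rw [← Function.comp_def (x₀ + ·) (γ * ·), ← Measure.map_map (by fun_prop) (by fun_prop),
    charFun_map_const_add, charFun_map_mul]
  simp [charFun_cauchyMeasure, abs_mul, mul_comm, Complex.exp_add]

lemma measurable_cauchyMeasure : Measurable fun q : ℝ × ℝ≥0 => cauchyMeasure q.1 q.2 := by
  refine Measure.measurable_of_measurable_coe _ fun s hs => ?_
  have haffine : Measurable fun w : (ℝ × ℝ≥0) × ℝ => w.1.1 + w.1.2 * w.2 := by fun_prop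
  have hmap (q : ℝ × ℝ≥0) : cauchyMeasure q.1 q.2 s =
      cauchyMeasure 0 1 (Prod.mk q ⁻¹' ((fun w => w.1.1 + w.1.2 * w.2) ⁻¹' s)) := by
    rw [cauchyMeasure_eq_map, Measure.map_apply (by fun_prop) hs]
    rfl
  simpa only [hmap] using measurable_measure_prodMk_left (haffine hs)

/-- Transition probabilities of the Cauchy process with scale `κ` and drift `-σ`, jointly in time
and starting point. At a time `t > 0` and for `κ > 0` the law started from `x` has the density
`y ↦ stableKernel κ σ t (x - y)`; where `κ * t ≤ 0` it is a Dirac mass. -/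
noncomputable def cauchyKernel (κ σ : ℝ) : Kernel (ℝ × ℝ) ℝ where
  toFun q := cauchyMeasure (q.2 - σ * q.1) (κ * q.1).toNNReal
  measurable' := by
    have hparam : Measurable fun q : ℝ × ℝ => (q.2 - σ * q.1, (κ * q.1).toNNReal) := by fun_prop
    exact measurable_cauchyMeasure.comp hparam

lemma cauchyKernel_apply (κ σ t x : ℝ) :
    cauchyKernel κ σ (t, x) = cauchyMeasure (x - σ * t) (κ * t).toNNReal := rfl

instance (κ σ : ℝ) : IsMarkovKernel (cauchyKernel κ σ) :=
  ⟨fun q => by rw [← Prod.mk.eta (p := q), cauchyKernel_apply]; infer_instance⟩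

lemma charFun_cauchyKernel {κ t : ℝ} (hκ : 0 ≤ κ) (ht : 0 ≤ t) (σ x ξ : ℝ) :
    charFun (cauchyKernel κ σ (t, x)) ξ =
      Complex.exp (ξ * x * I) * Complex.exp (t * (-(κ * |ξ|) - σ * ξ * I)) := by
  rw [cauchyKernel_apply, charFun_cauchyMeasure, Real.coe_toNNReal _ (mul_nonneg hκ ht),
    ← Complex.exp_add]
  push_cast
  ring_nf

lemma isTransitionSemigroup_cauchyKernel {κ : ℝ} (hκ : 0 ≤ κ) (σ : ℝ) :
    IsTransitionSemigroup (cauchyKernel κ σ) := by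
  intro s t hs ht
  ext1 x
  refine Measure.ext_of_charFun (funext fun ξ => ?_)
  have hexp_int : Integrable (fun z : ℝ => Complex.exp (ξ * z * I))
      (((cauchyKernel κ σ).sectR t ∘ₖ (cauchyKernel κ σ).sectR s) x) :=
    .of_bound (by fun_prop) 1 (.of_forall fun z => by
      exact_mod_cast (Complex.norm_exp_ofReal_mul_I (ξ * z)).le)
  rw [charFun_apply_real, Kernel.integral_comp hexp_int]
  simp only [← charFun_apply_real, Kernel.sectR_apply, charFun_cauchyKernel hκ ht.le]
  rw [integral_mul_const, ← charFun_apply_real, charFun_cauchyKernel hκ hs.le,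
    charFun_cauchyKernel hκ (add_pos hs ht).le, mul_assoc, ← Complex.exp_add]
  push_cast
  ring_nf

lemma integral_cauchyKernel {κ t : ℝ} (hκ : 0 < κ) (ht : 0 < t) (σ x : ℝ) (f : ℝ → ℝ) :
    ∫ y, f y ∂cauchyKernel κ σ (t, x) = ∫ y, stableKernel κ σ t (x - y) * f y := by
  have hscale : (κ * t).toNNReal ≠ 0 := (Real.toNNReal_pos.2 (mul_pos hκ ht)).ne'
  have hpdf (y : ℝ) : cauchyPDFReal (x - σ * t) (κ * t).toNNReal y =
      stableKernel κ σ t (x - y) := by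
    rw [cauchyPDFReal_def, stableKernel, Real.coe_toNNReal _ (mul_pos hκ ht).le,
      show (y - (x - σ * t)) ^ 2 = (x - y - σ * t) ^ 2 by ring]
    field_simp
  simpa only [cauchyKernel_apply, hpdf, smul_eq_mul] using
    integral_cauchyMeasure (x - σ * t) hscale f

lemma IsMildSolution.isDuhamelSolution {κ σ : ℝ} (hκ : 0 < κ) {g : ℝ → ℝ} {T : ℝ}
    {u : ℝ → ℝ → ℝ} (hu : IsMildSolution κ σ g T u) :
    IsDuhamelSolution (cauchyKernel κ σ) (fun y s => g (u y s)) T u := by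
  intro x t ht htT
  rw [hu x t ht htT, integral_cauchyKernel hκ ht, intervalIntegral.integral_of_le ht.le,
    integral_Ioc_eq_integral_Ioo, integral_Ioc_eq_integral_Ioo]
  congr 1
  exact setIntegral_congr_fun measurableSet_Ioo fun s hs =>
    (integral_cauchyKernel hκ (sub_pos.2 hs.2) σ x _).symm

end CauchyDistribution

/-- Invariance of order intervals. If `g` is locally Lipschitz,
`γ ≤ δ`, `g(γ) ≥ 0 ≥ g(δ)`, and `u` is a bounded continuous mild solution of
`∂_t u + Au = g(u)` on `ℝ × [0,T]` with `γ ≤ u(·,0) ≤ δ`, then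
`γ ≤ u(x,t) ≤ δ` for all `x ∈ ℝ`, `t ∈ [0,T]`. -/
theorem mild_solution_order_interval_invariance
    (β : ℝ) (hβ : β ∈ Set.Ioo (-1 : ℝ) 1)
    (κ σ : ℝ) (hκ : κ = Real.cos (π * β / 2)) (hσ : σ = Real.sin (π * β / 2))
    (g : ℝ → ℝ) (hg : LocallyLipschitz g)
    (γ δ : ℝ) (hγδ : γ ≤ δ) (hgγ : 0 ≤ g γ) (hgδ : g δ ≤ 0)
    (T : ℝ) (hT : 0 < T)
    (u : ℝ → ℝ → ℝ)
    (hu_cont : ContinuousOn (fun p : ℝ × ℝ => u p.1 p.2)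
      (Set.univ ×ˢ Set.Icc 0 T))
    (hu_bdd : ∃ M : ℝ, ∀ x : ℝ, ∀ t ∈ Set.Icc (0 : ℝ) T, |u x t| ≤ M)
    (hu : IsMildSolution κ σ g T u)
    (h0 : ∀ x : ℝ, u x 0 ∈ Set.Icc γ δ) :
    ∀ x : ℝ, ∀ t ∈ Set.Icc (0 : ℝ) T, u x t ∈ Set.Icc γ δ := by
  have hκ_pos : 0 < κ := hκ ▸ cos_pos_of_mem_Ioo
    ⟨by nlinarith [hβ.1, pi_pos], by nlinarith [hβ.2, pi_pos]⟩
  exact mild_solution_order_interval_invariance_general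
    (isTransitionSemigroup_cauchyKernel hκ_pos.le σ) hg hgγ hgδ
    hu_cont.domRestrict.measurable hu_bdd (hu.isDuhamelSolution hκ_pos) h0
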